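/- arXiv:2312.10212 — 3 statements merged into one kernel-verified Lean document; each statement's English description precedes it below -/
import Mathlib

section
/- Let 𝒳 be a countably generated measurable space, 𝒯 a measurable space, κ a Markov kernel from 𝒯 to 𝒳, and P_T a probability measure on 𝒯. Then (P_T ⊗ P_T)({(s, t) : κ(s) ≠ κ(t)}) = 0 if and only if there exists a measurable P_T-null set N ⊆ 𝒯 such that κ(s) = κ(t) for all s, t ∈ 𝒯 \ N, i.e. κ is constant outside a P_T-null set. -/
open MeasureTheory ProbabilityTheory

/-!
If `f s = f t` for almost every pair `(s, t)`, then by Fubini some section is conull: there is an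
`s₀` with `f s₀ = f t` for almost every `t`.
Conversely, if `f` is constant off a null set `N`, then the disagreement set lies in
`N ×ˢ univ ∪ univ ×ˢ N`. The disagreement set of an arbitrary `f` need not be measurable, so its
measure is to be read as an outer measure.
-/

section AlmostEverywhereConstant

open Filter

variable {α β γ : Type*} [MeasurableSpace α] [MeasurableSpace β]

theorem hasBasis_ae_compl (μ : Measure α) :
    (ae μ).HasBasis (fun N : Set α ↦ MeasurableSet N ∧ μ N = 0) (fun N ↦ Nᶜ) := by
  refine hasBasis_iff.2 fun s ↦ ⟨fun hs ↦ ?_, fun ⟨N, ⟨_, hN_null⟩, hNs⟩ ↦ ?_⟩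
  · obtain ⟨N, hsN, hN_meas, hN_null⟩ := exists_measurable_superset_of_null (mem_ae_iff.1 hs)
    exact ⟨N, ⟨hN_meas, hN_null⟩, Set.compl_subset_comm.1 hsN⟩
  · exact mem_of_superset (compl_mem_ae_iff.2 hN_null) hNs

theorem eventuallyConst_ae_iff_exists_null {μ : Measure α} {f : α → γ} :
    EventuallyConst f (ae μ) ↔
      ∃ N : Set α, MeasurableSet N ∧ μ N = 0 ∧ ∀ s ∉ N, ∀ t ∉ N, f s = f t := by
  simp only [(hasBasis_ae_compl μ).eventuallyConst_iff, Set.mem_compl_iff, and_assoc]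

theorem exists_ae_eq_const_of_ae_prod_eq {μ : Measure α} [NeZero μ] {ν : Measure β} [SFinite ν]
    {f : α → γ} {g : β → γ} (h : ∀ᵐ q ∂μ.prod ν, f q.1 = g q.2) :
    ∃ c : γ, g =ᵐ[ν] fun _ ↦ c := by
  obtain ⟨s₀, hs₀⟩ : ∃ s₀, ∀ᵐ t ∂ν, f s₀ = g t := (Measure.ae_ae_of_ae_prod h).exists
  exact ⟨f s₀, hs₀.mono fun _ ht ↦ ht.symm⟩

theorem ae_prod_eq_of_eventuallyConst {μ : Measure α} {f : α → γ}
    (h : EventuallyConst f (ae μ)) : ∀ᵐ q ∂μ.prod μ, f q.1 = f q.2 := by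
  obtain ⟨s, hs, hfs⟩ := (ae μ).basis_sets.eventuallyConst_iff.1 h
  filter_upwards [Measure.quasiMeasurePreserving_fst.ae hs,
    Measure.quasiMeasurePreserving_snd.ae hs] with q hq₁ hq₂ using hfs q.1 hq₁ q.2 hq₂

theorem ae_prod_eq_iff_eventuallyConst {μ : Measure α} [SFinite μ] {f : α → γ} :
    (∀ᵐ q ∂μ.prod μ, f q.1 = f q.2) ↔ EventuallyConst f (ae μ) := by
  refine ⟨fun h ↦ ?_, ae_prod_eq_of_eventuallyConst⟩
  rcases eq_zero_or_neZero μ with rfl | _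
  · rw [ae_zero]
    exact .bot
  · obtain ⟨c, hc⟩ := exists_ae_eq_const_of_ae_prod_eq h
    exact (EventuallyConst.const c).congr hc.symm

theorem stmt3_general (μ : Measure α) [SFinite μ] (f : α → γ) :
    (μ.prod μ) {q : α × α | f q.1 ≠ f q.2} = 0 ↔
      ∃ N : Set α, MeasurableSet N ∧ μ N = 0 ∧ ∀ s ∉ N, ∀ t ∉ N, f s = f t :=
  ae_iff.symm.trans (ae_prod_eq_iff_eventuallyConst.trans eventuallyConst_ae_iff_exists_null)

end AlmostEverywhereConstant

/-- Absence of drift: for a Markov kernel `κ` into a countably generated space and a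
probability measure `P_T` on the index space, the disagreement set is `P_T ⊗ P_T`-null
iff `κ` is constant outside a `P_T`-null set. -/
theorem stmt3 {𝒯 𝒳 : Type*} [MeasurableSpace 𝒯] [MeasurableSpace 𝒳]
    [MeasurableSpace.CountablyGenerated 𝒳]
    (κ : Kernel 𝒯 𝒳) [IsMarkovKernel κ]
    (PT : Measure 𝒯) [IsProbabilityMeasure PT] :
    (PT.prod PT) {q : 𝒯 × 𝒯 | κ q.1 ≠ κ q.2} = 0 ↔
      ∃ N : Set 𝒯, MeasurableSet N ∧ PT N = 0 ∧ ∀ s ∉ N, ∀ t ∉ N, κ s = κ t :=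
  stmt3_general PT κ
end

section
/- Let 𝒯 and 𝒳 be countably generated measurable spaces such that the diagonal {(x, y) ∈ 𝒳 × 𝒳 : x = y} is measurable in the product σ-algebra. Let (Ω, 𝒜, P) be a probability space, X : 𝒯 × Ω → 𝒳 a measurable stochastic process, and P_T a probability measure on 𝒯. Then (P ⊗ P_T ⊗ P_T)({(ω, s, t) : X(t, ω) = X(s, ω)}) = 1 if and only if there exists a measurable random variable C : Ω → 𝒳 such that (P ⊗ P_T)({(ω, t) : X(t, ω) = C(ω)}) = 1. -/
open MeasureTheory ProbabilityTheory

/-!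
If `X_S = X_T` almost surely, then by Fubini almost every time `s` has the property that
`X_t(ω) = X_s(ω)` for almost every `(ω, t)`, so `C` can be taken to be the section `X_s` for any
such `s`. Conversely, if the process agrees with `C`, then `X_S` and `X_T` both equal `C`.
-/

section ProdProd

variable {α β γ : Type*} [MeasurableSpace α] [MeasurableSpace β] [MeasurableSpace γ]
  {μ : Measure α} {ν : Measure β} {τ : Measure γ} [SFinite μ] [SFinite ν] [SFinite τ]

lemma measurePreserving_prod_left_comm :
    MeasurePreserving (fun q : β × α × γ => (q.2.1, q.1, q.2.2))
      (ν.prod (μ.prod τ)) (μ.prod (ν.prod τ)) :=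
  (measurePreserving_prodAssoc μ ν τ).comp <|
    (Measure.measurePreserving_swap.prod (.id τ)).comp <|
      (measurePreserving_prodAssoc ν μ τ).symm MeasurableEquiv.prodAssoc

lemma ae_ae_prod_of_ae_prod_prod {p : α × β × γ → Prop} (h : ∀ᵐ q ∂μ.prod (ν.prod τ), p q) :
    ∀ᵐ b ∂ν, ∀ᵐ q ∂μ.prod τ, p (q.1, b, q.2) :=
  Measure.ae_ae_of_ae_prod (measurePreserving_prod_left_comm.quasiMeasurePreserving.ae h)

lemma ae_prod_prod_and {p : α × β → Prop} {r : α × γ → Prop}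
    (hp : ∀ᵐ q ∂μ.prod ν, p q) (hr : ∀ᵐ q ∂μ.prod τ, r q) :
    ∀ᵐ q ∂μ.prod (ν.prod τ), p (q.1, q.2.1) ∧ r (q.1, q.2.2) :=
  have hfst : Measure.QuasiMeasurePreserving (Prod.map id Prod.fst)
      (μ.prod (ν.prod τ)) (μ.prod ν) :=
    QuasiMeasurePreserving.prodMap (.id μ) Measure.quasiMeasurePreserving_fst
  have hsnd : Measure.QuasiMeasurePreserving (Prod.map id Prod.snd)
      (μ.prod (ν.prod τ)) (μ.prod τ) :=
    QuasiMeasurePreserving.prodMap (.id μ) Measure.quasiMeasurePreserving_snd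
  (hfst.ae hp).and (hsnd.ae hr)

end ProdProd

lemma prob_setOf_eq_eq_one_iff {α β : Type*} [MeasurableSpace α] [MeasurableSpace β]
    [MeasurableEq β] {μ : Measure α} [IsProbabilityMeasure μ] {f g : α → β}
    (hf : Measurable f) (hg : Measurable g) :
    μ {a | f a = g a} = 1 ↔ ∀ᵐ a ∂μ, f a = g a :=
  (mem_ae_iff_prob_eq_one (measurableSet_eq_fun hf hg)).symm

theorem stmt4_general {Ω 𝒯 𝒳 : Type*} [MeasurableSpace Ω] [MeasurableSpace 𝒯] [MeasurableSpace 𝒳]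
    {P : Measure Ω} [SFinite P] {PT : Measure 𝒯} [SFinite PT] [NeZero PT]
    {X : 𝒯 → Ω → 𝒳} (hX : ∀ t, Measurable (X t)) :
    (∀ᵐ q ∂P.prod (PT.prod PT), X q.2.2 q.1 = X q.2.1 q.1) ↔
      ∃ C : Ω → 𝒳, Measurable C ∧ ∀ᵐ q ∂P.prod PT, X q.2 q.1 = C q.1 := by
  constructor
  · intro h
    obtain ⟨s, hs⟩ := (ae_ae_prod_of_ae_prod_prod h).exists
    exact ⟨X s, hX s, hs⟩
  · rintro ⟨C, -, hC⟩
    filter_upwards [ae_prod_prod_and hC hC] with q ⟨hs, ht⟩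
    exact ht.trans hs.symm

/-- Path-wise equality lemma: for a measurable stochastic process `X` over countably
generated spaces with measurable diagonal, `X_S = X_T` holds `P ⊗ P_T ⊗ P_T`-a.s.
iff the process is `P ⊗ P_T`-a.s. equal to a single random variable `C`. -/
theorem stmt4 {Ω 𝒯 𝒳 : Type*} [MeasurableSpace Ω] [MeasurableSpace 𝒯] [MeasurableSpace 𝒳]
    [MeasurableSpace.CountablyGenerated 𝒯] [MeasurableSpace.CountablyGenerated 𝒳]
    (hdiag : MeasurableSet {q : 𝒳 × 𝒳 | q.1 = q.2})
    (P : Measure Ω) [IsProbabilityMeasure P]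
    (X : 𝒯 × Ω → 𝒳) (hX : Measurable X)
    (PT : Measure 𝒯) [IsProbabilityMeasure PT] :
    (P.prod (PT.prod PT)) {q : Ω × 𝒯 × 𝒯 | X (q.2.2, q.1) = X (q.2.1, q.1)} = 1 ↔
      ∃ C : Ω → 𝒳, Measurable C ∧ (P.prod PT) {q : Ω × 𝒯 | X (q.2, q.1) = C q.1} = 1 := by
  have : MeasurableEq 𝒳 := ⟨hdiag⟩
  rw [prob_setOf_eq_eq_one_iff (by fun_prop) (by fun_prop),
    stmt4_general (X := fun t ω => X (t, ω)) (by fun_prop)]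
  exact exists_congr fun C => and_congr_right fun hC =>
    (prob_setOf_eq_eq_one_iff (by fun_prop) (by fun_prop)).symm
end

section
/- Let 𝒯 = [0, 1] with a Borel probability measure P_T, let 𝒳 ⊆ ℝ^d be a measurable set, and let 𝒞 be a nonempty collection of continuous functions g : [0, 1] → ℝ^d. Assume there exists a P_T-null set N ⊆ [0, 1] such that for every t ∈ [0, 1] \ N, every x ∈ 𝒳, and every ε > 0 there exists g ∈ 𝒞 with ‖g(t) − x‖₂ < ε (i.e. the closure of {g(t) : g ∈ 𝒞} contains 𝒳 for P_T-almost every t). Let 1 ≤ p < ∞ and let x_• : [0, 1] → 𝒳 be measurable with ∫ ‖x_t‖₂^p dP_T(t) < ∞. Then for every ε > 0 there exist n ∈ ℕ, points 0 = t_0 < t_1 < … < t_n = 1, and functions g_1, …, g_n ∈ 𝒞 such that the piecewise (cadlag) function h : [0,1] → ℝ^d defined by h(t) = g_k(t) for t ∈ [t_{k−1}, t_k) (and h(1) = g_n(1)) satisfies (∫ ‖x_t − h(t)‖₂^p dP_T(t))^{1/p} < ε. -/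
open MeasureTheory
open scoped ENNReal

open Set Filter
open scoped Topology

/-!
The case of a continuous path is a compactness argument: if every time in a compact set `K` has a
neighbourhood on which a single member of `𝒞` approximates the path, a grid finer than a Lebesgue
number of these neighbourhoods lets one member of `𝒞` be chosen per cell, and a fixed `g₀ ∈ 𝒞` is
used on the cells that miss `K`.

A general path `x` is not continuous, so it is first replaced by a continuous `y` close to it in
`L^p`. By Chebyshev's inequality, density at `x t` gives a good approximation at `y t` outside a set
of small measure. Hence the times where `g₀` must be used also have small measure, and there
`‖x - g₀‖^p` has a small integral by absolute continuity.
-/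

section Piecewise

variable {α : Type*} {𝒞 : Set (ℝ → α)}

/-- The cadlag functions on `[0, 1]` piecewise contained in `𝒞`: there is a subdivision
`0 = t 0 < ⋯ < t n = 1` such that `h` agrees with some `g i ∈ 𝒞` on each `[t (i - 1), t i)`, and
with `g n` at `1`. Pieces are numbered from `1` to `n`, and `h` is arbitrary outside `[0, 1]`. -/
def IsPiecewiseIn (𝒞 : Set (ℝ → α)) (h : ℝ → α) : Prop :=
  ∃ (n : ℕ) (t : ℕ → ℝ) (g : ℕ → ℝ → α),
    0 < n ∧ t 0 = 0 ∧ t n = 1 ∧ (∀ i < n, t i < t (i + 1)) ∧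
    (∀ i, 1 ≤ i → i ≤ n → g i ∈ 𝒞) ∧
    (∀ i, 1 ≤ i → i ≤ n → ∀ s ∈ Ico (t (i - 1)) (t i), h s = g i s) ∧
    h 1 = g n 1

/-- The number in `{1, …, n}` of the cell of the uniform grid with `n` cells on `[0, 1]` that
contains `s`. Cell `i` is `[(i - 1) / n, i / n)`, except that the minimum puts `1` into cell `n`. -/
noncomputable def gridIndex (n : ℕ) (s : ℝ) : ℕ := min (⌊n * s⌋₊ + 1) n

lemma gridIndex_eq_of_mem_Ico {n j : ℕ} {s : ℝ} (hj : j < n)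
    (hs : s ∈ Ico ((j : ℝ) / n) ((j + 1 : ℕ) / n)) : gridIndex n s = j + 1 := by
  have hn : (0 : ℝ) < n := by exact_mod_cast j.zero_le.trans_lt hj
  have lower : (j : ℝ) ≤ n * s := (div_le_iff₀' hn).1 hs.1
  have upper : n * s < (j : ℝ) + 1 := by exact_mod_cast (lt_div_iff₀' hn).1 hs.2
  have floor_eq : ⌊n * s⌋₊ = j := (Nat.floor_eq_iff (j.cast_nonneg.trans lower)).2 ⟨lower, upper⟩
  rw [gridIndex, floor_eq]
  exact min_eq_left hj

lemma gridIndex_one (n : ℕ) : gridIndex n 1 = n := by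
  simp [gridIndex]

lemma gridIndex_mem_Icc {n : ℕ} {s : ℝ} (hs : s ∈ Icc (0 : ℝ) 1) :
    (gridIndex n s : ℝ) ∈ Icc (n * s) (n * s + 1) := by
  have floor_le : (⌊n * s⌋₊ : ℝ) ≤ n * s := Nat.floor_le (mul_nonneg n.cast_nonneg hs.1)
  push_cast [gridIndex]
  exact ⟨le_min (Nat.lt_floor_add_one _).le (mul_le_of_le_one_right n.cast_nonneg hs.2),
    (min_le_left _ _).trans (by gcongr)⟩

lemma dist_le_of_gridIndex_eq {n : ℕ} {s u : ℝ} (hn : 0 < n) (hs : s ∈ Icc (0 : ℝ) 1)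
    (hu : u ∈ Icc (0 : ℝ) 1) (hsu : gridIndex n s = gridIndex n u) : dist s u ≤ 1 / n := by
  have hn : (0 : ℝ) < n := Nat.cast_pos.2 hn
  obtain ⟨hs_le, le_hs⟩ := gridIndex_mem_Icc (n := n) hs
  obtain ⟨hu_le, le_hu⟩ := gridIndex_mem_Icc (n := n) hu
  rw [hsu] at hs_le le_hs
  rw [Real.dist_eq, abs_sub_le_iff, le_div_iff₀' hn, le_div_iff₀' hn]
  constructor <;> linarith

lemma isPiecewiseIn_gridIndex {n : ℕ} (hn : 0 < n) {g : ℕ → ℝ → α} (hg : ∀ i, g i ∈ 𝒞) :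
    IsPiecewiseIn 𝒞 fun s ↦ g (gridIndex n s) s := by
  have hn' : (0 : ℝ) < n := Nat.cast_pos.2 hn
  refine ⟨n, fun i ↦ i / n, g, hn, by simp, div_self hn'.ne', fun i _ ↦ ?_, fun i _ _ ↦ hg i,
    fun i hi hin s hs ↦ ?_, by simp only [gridIndex_one]⟩
  · exact div_lt_div_of_pos_right (by exact_mod_cast i.lt_succ_self) hn'
  · obtain ⟨j, rfl⟩ := Nat.exists_eq_add_of_le' hi
    simp only [gridIndex_eq_of_mem_Ico hin hs]

lemma exists_isPiecewiseIn_of_isCompact {K : Set ℝ} (hK : IsCompact K) {P : ℝ → α → Prop}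
    (hP : ∀ t ∈ K, ∃ g ∈ 𝒞, ∀ᶠ s in 𝓝[Icc 0 1] t, P s (g s)) {g₀ : ℝ → α} (hg₀ : g₀ ∈ 𝒞) :
    ∃ h, IsPiecewiseIn 𝒞 h ∧ ∀ s ∈ Icc (0 : ℝ) 1, P s (h s) ∨ s ∉ K ∧ h s = g₀ s := by
  obtain ⟨ρ, hρ, hball⟩ := lebesgue_number_lemma_of_metric hK
    (c := fun g : 𝒞 ↦ interior {s | s ∈ Icc 0 1 → P s (g.1 s)}) (fun _ ↦ isOpen_interior)
    fun t ht ↦ by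
      obtain ⟨g, hg, hgP⟩ := hP t ht
      exact mem_iUnion.2 ⟨⟨g, hg⟩, mem_interior_iff_mem_nhds.2 (eventually_nhdsWithin_iff.1 hgP)⟩
  obtain ⟨m, hm⟩ := exists_nat_one_div_lt hρ
  have exists_piece (i : ℕ) : ∃ g ∈ 𝒞, ∀ s ∈ Icc (0 : ℝ) 1, gridIndex (m + 1) s = i →
      P s (g s) ∨ s ∉ K ∧ g s = g₀ s := by
    by_cases hi : ∃ u ∈ K ∩ Icc 0 1, gridIndex (m + 1) u = i
    · obtain ⟨u, ⟨huK, hu⟩, hui⟩ := hi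
      obtain ⟨⟨g, hg⟩, hug⟩ := hball u huK
      refine ⟨g, hg, fun s hs hsi ↦ .inl (interior_subset (hug ?_) hs)⟩
      have hdist := dist_le_of_gridIndex_eq m.succ_pos hs hu (hsi.trans hui.symm)
      exact hdist.trans_lt (by exact_mod_cast hm)
    · exact ⟨g₀, hg₀, fun s hs hsi ↦ .inr ⟨fun hsK ↦ hi ⟨s, ⟨hsK, hs⟩, hsi⟩, rfl⟩⟩
  choose g hg hPg using exists_piece
  exact ⟨_, isPiecewiseIn_gridIndex m.succ_pos hg, fun s hs ↦ hPg _ s hs rfl⟩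

lemma exists_isPiecewiseIn_of_measure_lt {μ : Measure ℝ} [IsFiniteMeasure μ] {P : ℝ → α → Prop}
    {δ : ℝ≥0∞} (hδ : μ {t | ¬∃ g ∈ 𝒞, ∀ᶠ s in 𝓝[Icc 0 1] t, P s (g s)} < δ)
    {g₀ : ℝ → α} (hg₀ : g₀ ∈ 𝒞) :
    ∃ h B, IsPiecewiseIn 𝒞 h ∧ MeasurableSet B ∧ μ B < δ ∧
      ∀ s ∈ Icc (0 : ℝ) 1, P s (h s) ∨ s ∈ B ∧ h s = g₀ s := by
  set V : Set ℝ := {t | ∃ g ∈ 𝒞, ∀ᶠ s in 𝓝[Icc 0 1] t, P s (g s)} with hV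
  have hVo : IsOpen V := by
    simp only [hV, eventually_nhdsWithin_iff, ← exists_prop, ofPred_exists]
    exact isOpen_iUnion fun g ↦ isOpen_iUnion fun _ ↦ isOpen_setOfPred_eventually_nhds
  change μ Vᶜ < δ at hδ
  obtain ⟨K, hKV, hK, hVK⟩ := hVo.measurableSet.exists_isCompact_sdiff_lt (measure_ne_top μ V)
    (tsub_pos_iff_lt.2 hδ).ne'
  obtain ⟨h, hh, hPh⟩ := exists_isPiecewiseIn_of_isCompact hK (fun t ht ↦ hKV ht) hg₀
  refine ⟨h, Kᶜ, hh, hK.measurableSet.compl, ?_, hPh⟩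
  calc μ Kᶜ ≤ μ (V \ K ∪ Vᶜ) := measure_mono fun t ht ↦ by by_cases t ∈ V <;> simp_all
    _ ≤ μ (V \ K) + μ Vᶜ := measure_union_le _ _
    _ < δ := lt_tsub_iff_right.1 hVK

end Piecewise

section Lp

variable {α E : Type*} [MeasurableSpace α] [NormedAddCommGroup E] {p : ℝ≥0∞}

lemma eLpNorm_ofReal_eq_lintegral_ofReal_norm_rpow {μ : Measure α} {p : ℝ} (hp : 0 < p)
    (f : α → E) :
    eLpNorm f (.ofReal p) μ = (∫⁻ a, .ofReal (‖f a‖ ^ p) ∂μ) ^ (1 / p) := by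
  rw [eLpNorm_eq_lintegral_rpow_enorm_toReal (ENNReal.ofReal_pos.2 hp).ne' ENNReal.ofReal_ne_top,
    ENNReal.toReal_ofReal hp.le]
  simp only [← ofReal_norm, ENNReal.ofReal_rpow_of_nonneg (norm_nonneg _) hp.le]

lemma memLp_ofReal_iff {μ : Measure α} {p : ℝ} (hp : 0 < p) {f : α → E} :
    MemLp f (.ofReal p) μ ↔
      AEStronglyMeasurable f μ ∧ ∫⁻ a, .ofReal (‖f a‖ ^ p) ∂μ < ∞ := by
  rw [MemLp, eLpNorm_ofReal_eq_lintegral_ofReal_norm_rpow hp,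
    ENNReal.rpow_lt_top_iff_of_pos (one_div_pos.2 hp)]

lemma exists_pos_forall_eLpNorm_indicator_lt {μ : Measure α} {f : α → E} (hf : MemLp f p μ)
    (hp₀ : p ≠ 0) (hp : p ≠ ∞) {ε : ℝ≥0∞} (hε : ε ≠ 0) :
    ∃ δ > 0, ∀ s, MeasurableSet s → μ s < δ → eLpNorm (s.indicator f) p μ < ε := by
  have hp_pos : 0 < p.toReal := ENNReal.toReal_pos hp₀ hp
  obtain ⟨δ, hδ, hlt⟩ := exists_pos_setLIntegral_lt_of_measure_lt
    (lintegral_rpow_enorm_lt_top_of_eLpNorm_lt_top hp₀ hp hf.eLpNorm_lt_top).ne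
    (ENNReal.rpow_pos_of_nonneg (pos_iff_ne_zero.2 hε) hp_pos.le).ne'
  refine ⟨δ, hδ, fun s hs hμs ↦ ?_⟩
  rw [eLpNorm_indicator_eq_eLpNorm_restrict hs, eLpNorm_eq_lintegral_rpow_enorm_toReal hp₀ hp,
    one_div, ENNReal.rpow_inv_lt_iff hp_pos]
  exact hlt s hμs

lemma exists_pos_eLpNorm_const_lt (μ : Measure α) [IsFiniteMeasure μ] (hp₀ : p ≠ 0) (hp : p ≠ ∞)
    {ε : ℝ≥0∞} (hε : ε ≠ 0) : ∃ c : ℝ, 0 < c ∧ eLpNorm (fun _ : α ↦ c) p μ < ε := by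
  obtain ⟨c, hc, hlt⟩ := ENNReal.exists_nnreal_pos_mul_lt
    (ENNReal.rpow_ne_top_of_nonneg (one_div_nonneg.2 p.toReal_nonneg) (measure_ne_top μ univ)) hε
  refine ⟨c, hc, ?_⟩
  rwa [eLpNorm_const' _ hp₀ hp, Real.enorm_of_nonneg c.coe_nonneg, ENNReal.ofReal_coe_nnreal]

lemma measure_le_of_eLpNorm_le {μ : Measure α} {f : α → E} (hf : AEStronglyMeasurable f μ)
    (hp₀ : p ≠ 0) (hp : p ≠ ∞) {c : ℝ} (hc : 0 < c) {δ : ℝ≥0∞}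
    (hfδ : eLpNorm f p μ ≤ .ofReal c * δ ^ p.toReal⁻¹) : μ {a | c ≤ ‖f a‖} ≤ δ := by
  have hp_pos : 0 < p.toReal := ENNReal.toReal_pos hp₀ hp
  have chebyshev : .ofReal c ^ p.toReal * μ {a | c ≤ ‖f a‖} ≤ .ofReal c ^ p.toReal * δ :=
    calc .ofReal c ^ p.toReal * μ {a | c ≤ ‖f a‖}
      _ ≤ eLpNorm f p μ ^ p.toReal := by
          simpa only [← ofReal_norm, ENNReal.ofReal_le_ofReal_iff (norm_nonneg _)] using
            mul_meas_ge_le_pow_eLpNorm' μ hp₀ hp hf (.ofReal c)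
      _ ≤ (.ofReal c * δ ^ p.toReal⁻¹) ^ p.toReal := by gcongr
      _ = .ofReal c ^ p.toReal * δ := by
          rw [ENNReal.mul_rpow_of_nonneg _ _ hp_pos.le, ENNReal.rpow_inv_rpow hp_pos.ne']
  have hc_pos : 0 < ENNReal.ofReal c := ENNReal.ofReal_pos.2 hc
  exact (ENNReal.mul_le_mul_iff_right (ENNReal.rpow_pos hc_pos ENNReal.ofReal_ne_top).ne'
    (ENNReal.rpow_ne_top_of_nonneg hp_pos.le ENNReal.ofReal_ne_top)).1 chebyshev

lemma exists_continuous_eLpNorm_sub_le_and_measure_lt [TopologicalSpace α] [NormalSpace α]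
    [BorelSpace α] [NormedSpace ℝ E] {μ : Measure α} [μ.WeaklyRegular] {f : α → E}
    (hf : MemLp f p μ) (hp₀ : p ≠ 0) (hp : p ≠ ∞) {ε δ : ℝ≥0∞} (hε : ε ≠ 0) (hδ : δ ≠ 0) {c : ℝ}
    (hc : 0 < c) :
    ∃ y : α → E, Continuous y ∧ MemLp y p μ ∧ eLpNorm (f - y) p μ ≤ ε ∧
      μ {a | c ≤ ‖f a - y a‖} < δ := by
  obtain ⟨δ', hδ', hδ'δ⟩ := exists_between (pos_iff_ne_zero.2 hδ)
  have hcδ' : ENNReal.ofReal c * δ' ^ p.toReal⁻¹ ≠ 0 :=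
    mul_ne_zero (ENNReal.ofReal_pos.2 hc).ne' (ENNReal.rpow_pos hδ' hδ'δ.ne_top).ne'
  obtain ⟨y, hfy, hy⟩ := hf.exists_boundedContinuous_eLpNorm_sub_le hp
    (lt_min (pos_iff_ne_zero.2 hε) (pos_iff_ne_zero.2 hcδ')).ne'
  exact ⟨y, y.continuous, hy, hfy.trans (min_le_left _ _), (measure_le_of_eLpNorm_le
    (hf.sub hy).aestronglyMeasurable hp₀ hp hc (hfy.trans (min_le_right _ _))).trans_lt hδ'δ⟩

lemma memLp_of_isCompact_of_continuousOn [TopologicalSpace α] [OpensMeasurableSpace α]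
    [T2Space α] [SecondCountableTopologyEither α E] {μ : Measure α}
    [IsFiniteMeasure μ] {K : Set α} (hK : IsCompact K) (hμ : ∀ᵐ a ∂μ, a ∈ K) {f : α → E}
    (hf : ContinuousOn f K) : MemLp f p μ := by
  obtain ⟨C, hC⟩ := hK.exists_bound_of_continuousOn hf
  refine .of_bound ?_ C (hμ.mono hC)
  rw [← Measure.restrict_eq_self_of_ae_mem hμ]
  exact hf.aestronglyMeasurable hK.measurableSet

end Lp

section Density

variable {E : Type*} [NormedAddCommGroup E]

lemma eventually_norm_sub_lt_of_norm_sub_lt {X : Type*} [TopologicalSpace X] {I : Set X} {t : X}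
    {y g : X → E} (hy : ContinuousWithinAt y I t) (hg : ContinuousWithinAt g I t) {v : E} {c : ℝ}
    (hyv : ‖v - y t‖ < c) (hgv : ‖g t - v‖ < c) : ∀ᶠ s in 𝓝[I] t, ‖y s - g s‖ < 2 * c := by
  refine (hy.sub hg).norm.eventually_lt_const ?_
  calc ‖y t - g t‖ = ‖g t - y t‖ := norm_sub_rev _ _
    _ ≤ ‖g t - v‖ + ‖v - y t‖ := norm_sub_le_norm_sub_add_norm_sub _ _ _
    _ < 2 * c := by linarith

lemma norm_sub_le_norm_sub_add_add_norm_indicator {X : Type*} {x y h g₀ : X → E} {B : Set X} {c : ℝ}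
    (hc : 0 ≤ c) {s : X} (hs : ‖y s - h s‖ ≤ c ∨ s ∈ B ∧ h s = g₀ s) :
    ‖x s - h s‖ ≤ ‖x s - y s‖ + (c + ‖B.indicator (x - g₀) s‖) := by
  obtain hyh | ⟨hsB, hsg⟩ := hs
  · linarith [norm_sub_le_norm_sub_add_norm_sub (x s) (y s) (h s),
      norm_nonneg (B.indicator (x - g₀) s)]
  · rw [indicator_of_mem hsB, Pi.sub_apply, hsg]
    linarith [norm_nonneg (x s - y s)]

theorem stmt13_general [NormedSpace ℝ E] {μ : Measure ℝ} [IsFiniteMeasure μ]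
    (hμ : ∀ᵐ t ∂μ, t ∈ Icc (0 : ℝ) 1) {𝒞 : Set (ℝ → E)} (h𝒞ne : 𝒞.Nonempty)
    (h𝒞cont : ∀ g ∈ 𝒞, ContinuousOn g (Icc 0 1)) {p : ℝ≥0∞} (hp₀ : p ≠ 0) (hp : p ≠ ∞)
    {x : ℝ → E} (hx : MemLp x p μ)
    (hdense : ∀ᵐ t ∂μ, ∀ ε > 0, ∃ g ∈ 𝒞, ‖g t - x t‖ < ε) {ε : ℝ≥0∞} (hε : ε ≠ 0) :
    ∃ h, IsPiecewiseIn 𝒞 h ∧ eLpNorm (x - h) p μ < ε := by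
  obtain ⟨g₀, hg₀⟩ := h𝒞ne
  have hxg₀ : MemLp (x - g₀) p μ :=
    hx.sub (memLp_of_isCompact_of_continuousOn isCompact_Icc hμ (h𝒞cont g₀ hg₀))
  obtain ⟨η, hη, sum_lt⟩ := exists_Lp_half ℝ μ p hε
  obtain ⟨θ, hθ, sum_lt_η⟩ := exists_Lp_half ℝ μ p hη.ne'
  obtain ⟨c, hc, hcθ⟩ := exists_pos_eLpNorm_const_lt μ hp₀ hp hθ.ne'
  obtain ⟨δ, hδ, indicator_lt⟩ := exists_pos_forall_eLpNorm_indicator_lt hxg₀ hp₀ hp hθ.ne'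
  obtain ⟨y, hyc, hy, hxy, hxyδ⟩ := exists_continuous_eLpNorm_sub_le_and_measure_lt hx hp₀ hp
    hη.ne' hδ.ne' (half_pos hc)
  have bad_times_lt : μ {t | ¬∃ g ∈ 𝒞, ∀ᶠ s in 𝓝[Icc 0 1] t, ‖y s - g s‖ < c} < δ := by
    refine (measure_mono_ae ?_).trans_lt hxyδ
    filter_upwards [hμ, hdense] with t htI ht not_approx
    by_contra! hxyt
    obtain ⟨g, hg, hgt⟩ := ht (c / 2) (half_pos hc)
    have approx := eventually_norm_sub_lt_of_norm_sub_lt hyc.continuousWithinAt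
      (h𝒞cont g hg t htI) (lt_of_not_ge hxyt) hgt
    exact not_approx ⟨g, hg, by rwa [mul_div_cancel₀ c two_ne_zero] at approx⟩
  obtain ⟨h, B, hh, hB, hBδ, hyh⟩ :=
    exists_isPiecewiseIn_of_measure_lt (P := fun s v ↦ ‖y s - v‖ < c) bad_times_lt hg₀
  have hI : AEStronglyMeasurable (B.indicator (x - g₀)) μ := hxg₀.1.indicator hB
  have tail_lt : eLpNorm ((fun _ ↦ c) + (‖B.indicator (x - g₀) ·‖)) p μ < η :=
    sum_lt_η _ _ aestronglyMeasurable_const hI.norm hcθ.le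
      ((eLpNorm_norm _).trans_le (indicator_lt B hB hBδ).le)
  refine ⟨h, hh, ?_⟩
  calc eLpNorm (x - h) p μ
    _ ≤ eLpNorm ((‖(x - y) ·‖) + ((fun _ ↦ c) + (‖B.indicator (x - g₀) ·‖))) p μ :=
        eLpNorm_mono_ae_real <| hμ.mono fun s hs ↦
          norm_sub_le_norm_sub_add_add_norm_indicator hc.le ((hyh s hs).imp_left le_of_lt)
    _ < ε := sum_lt _ _ (hx.sub hy).1.norm (aestronglyMeasurable_const.add hI.norm)
        ((eLpNorm_norm _).trans_le hxy) tail_lt.le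

end Density

/-- Lemma 2, part 2: if the model class `𝒞` of continuous functions is pointwise dense
in `𝒳` for `P_T`-a.e. `t ∈ [0,1]`, then every measurable `L^p` path with values in `𝒳`
can be approximated in `L^p(P_T)` by cadlag functions piecewise contained in `𝒞`. -/
theorem stmt13 (d : ℕ)
    (PT : Measure ℝ) [IsProbabilityMeasure PT] (hPT : PT (Set.Icc (0:ℝ) 1)ᶜ = 0)
    (𝒳 : Set (EuclideanSpace ℝ (Fin d))) (h𝒳 : MeasurableSet 𝒳)
    (𝒞 : Set (ℝ → EuclideanSpace ℝ (Fin d))) (h𝒞ne : 𝒞.Nonempty)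
    (h𝒞cont : ∀ g ∈ 𝒞, ContinuousOn g (Set.Icc (0:ℝ) 1))
    (N : Set ℝ) (hNm : MeasurableSet N) (hN : PT N = 0)
    (hdense : ∀ t ∈ Set.Icc (0:ℝ) 1 \ N, ∀ x ∈ 𝒳, ∀ ε > 0, ∃ g ∈ 𝒞, ‖g t - x‖ < ε)
    (p : ℝ) (hp : 1 ≤ p)
    (x : ℝ → EuclideanSpace ℝ (Fin d)) (hxm : Measurable x)
    (hxval : ∀ t ∈ Set.Icc (0:ℝ) 1, x t ∈ 𝒳)
    (hxint : ∫⁻ t, ENNReal.ofReal (‖x t‖ ^ p) ∂PT < ⊤) :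
    ∀ ε > 0, ∃ (n : ℕ) (t : ℕ → ℝ) (g : ℕ → ℝ → EuclideanSpace ℝ (Fin d))
      (h : ℝ → EuclideanSpace ℝ (Fin d)),
      0 < n ∧ t 0 = 0 ∧ t n = 1 ∧ (∀ i < n, t i < t (i + 1)) ∧
      (∀ i, 1 ≤ i → i ≤ n → g i ∈ 𝒞) ∧
      (∀ i, 1 ≤ i → i ≤ n → ∀ s ∈ Set.Ico (t (i - 1)) (t i), h s = g i s) ∧
      h 1 = g n 1 ∧
      (∫⁻ s, ENNReal.ofReal (‖x s - h s‖ ^ p) ∂PT) ^ (1 / p) < ENNReal.ofReal ε := by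
  intro ε hε
  have hp₀ : 0 < p := zero_lt_one.trans_le hp
  have hI : ∀ᵐ t ∂PT, t ∈ Icc (0 : ℝ) 1 := mem_ae_iff.2 hPT
  have hdense_ae : ∀ᵐ t ∂PT, ∀ ε > 0, ∃ g ∈ 𝒞, ‖g t - x t‖ < ε := by
    filter_upwards [hI, measure_eq_zero_iff_ae_notMem.1 hN] with t ht htN
    exact hdense t ⟨ht, htN⟩ (x t) (hxval t ht)
  obtain ⟨h, ⟨n, t, g, hn, ht₀, htn, ht, hg, hhg, hh₁⟩, hlt⟩ := stmt13_general hI h𝒞ne h𝒞cont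
    (ENNReal.ofReal_pos.2 hp₀).ne' ENNReal.ofReal_ne_top
    ((memLp_ofReal_iff hp₀).2 ⟨hxm.aestronglyMeasurable, hxint⟩) hdense_ae
    (ENNReal.ofReal_pos.2 hε).ne'
  rw [eLpNorm_ofReal_eq_lintegral_ofReal_norm_rpow hp₀] at hlt
  exact ⟨n, t, g, h, hn, ht₀, htn, ht, hg, hhg, hh₁, hlt⟩
end
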